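/- Let {A_i : i ∈ I} and {B_j : j ∈ J} be two countable families of abelian groups such that each A_i and each B_j is torsion-free of rank 1 (i.e., nonzero, torsion-free, and embeddable in ℚ) and satisfies pG ≠ G for every prime p (where G is A_i or B_j respectively). If the abelian groups ∏_{i∈I} A_i and ∏_{j∈J} B_j are isomorphic, then there exists a bijection σ : I → J such that A_i ≅ B_{σ(i)} for every i ∈ I. -/

import Mathlib

/-- An abelian group is torsion-free of rank 1 if it is nonzero, torsion-free, and embeds
into `ℚ`. -/
def IsTorsionFreeRankOne (G : Type*) [AddCommGroup G] : Prop :=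
  (∃ x : G, x ≠ 0) ∧
    (∀ (n : ℤ) (g : G), n • g = 0 → n = 0 ∨ g = 0) ∧
    ∃ f : G →+ ℚ, Function.Injective f

/-!
A torsion-free group of rank one is either isomorphic to `ℚ` or slender, and two such groups with
nonzero homomorphisms in both directions are isomorphic. Hence, for a countable product `X` of such
groups and `C` of rank one, a composite `C → X → C` only sees the factors of `X` isomorphic to `C`.
It follows that the number of these factors is the largest size of a biorthogonal system of
homomorphisms `C → X` and `X → C`, an isomorphism invariant of `X`; for countable families these
numbers determine the factors up to a bijection.
-/

namespace IsTorsionFreeRankOne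

variable {A B G : Type*} [AddCommGroup A] [AddCommGroup B] [AddCommGroup G]

theorem of_addEquiv (hA : IsTorsionFreeRankOne A) (e : A ≃+ B) : IsTorsionFreeRankOne B := by
  obtain ⟨⟨x, hx⟩, htf, a, ha⟩ := hA
  refine ⟨⟨e x, (map_ne_zero_iff e e.injective).mpr hx⟩, fun n y hny => ?_,
    a.comp e.symm.toAddMonoidHom, ha.comp e.symm.injective⟩
  refine (htf n (e.symm y) ?_).imp_right (map_eq_zero_iff e.symm e.symm.injective).mp
  rw [← map_zsmul, hny, map_zero]

theorem isAddTorsionFree (hG : IsTorsionFreeRankOne G) : IsAddTorsionFree G :=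
  let ⟨_, _, a, ha⟩ := hG
  ha.isAddTorsionFree a

theorem countable (hG : IsTorsionFreeRankOne G) : Countable G :=
  let ⟨_, _, _, ha⟩ := hG
  ha.countable

theorem exists_coprime_zsmul_eq_zsmul (hG : IsTorsionFreeRankOne G) {x : G} (hx : x ≠ 0) (y : G) :
    ∃ n m : ℤ, n ≠ 0 ∧ IsCoprime n m ∧ n • y = m • x := by
  obtain ⟨-, -, a, ha⟩ := hG
  have hax : a x ≠ 0 := (map_ne_zero_iff a ha).mpr hx
  refine ⟨(a y / a x).den, (a y / a x).num, by exact_mod_cast (a y / a x).den_nz,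
    (Rat.isCoprime_num_den _).symm, ha ?_⟩
  rw [map_zsmul, map_zsmul, zsmul_eq_mul, zsmul_eq_mul, Int.cast_natCast, ← Rat.den_mul_eq_num,
    mul_assoc, div_mul_cancel₀ _ hax]

theorem injective_of_ne_zero [IsAddTorsionFree B] (hA : IsTorsionFreeRankOne A) {α : A →+ B}
    (hα : α ≠ 0) : Function.Injective α := by
  refine (injective_iff_map_eq_zero α).mpr fun x hαx => by_contra fun hx => hα ?_
  ext y
  obtain ⟨n, m, hn, -, hnm⟩ := hA.exists_coprime_zsmul_eq_zsmul hx y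
  apply (smul_eq_zero_iff_right hn).mp
  rw [← map_zsmul, hnm, map_zsmul, hαx, smul_zero]

theorem exists_zsmul_eq_zsmul_of_ne_zero (hG : IsTorsionFreeRankOne G) {γ : G →+ G}
    (hγ : γ ≠ 0) : ∃ n m : ℤ, m ≠ 0 ∧ ∀ y, n • γ y = m • y := by
  have := hG.isAddTorsionFree
  obtain ⟨x, hγx⟩ := DFunLike.ne_iff.mp hγ
  have hx : x ≠ 0 := fun h => hγx (by simp [h])
  obtain ⟨n, m, hn, -, hnm⟩ := hG.exists_coprime_zsmul_eq_zsmul hx (γ x)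
  refine ⟨n, m, ?_, fun y => ?_⟩
  · rintro rfl
    exact smul_ne_zero hn hγx (by simpa using hnm)
  · obtain ⟨r, s, hr, -, hrs⟩ := hG.exists_coprime_zsmul_eq_zsmul hx y
    apply zsmul_right_injective hr
    calc r • n • γ y = n • γ (r • y) := by rw [map_zsmul, smul_comm]
      _ = s • n • γ x := by rw [hrs, map_zsmul, smul_comm]
      _ = m • s • x := by rw [hnm, smul_comm]
      _ = r • m • y := by rw [← hrs, smul_comm]

theorem exists_eq_zsmul_add_nsmul (hG : IsTorsionFreeRankOne G) {p : ℕ} (hp : p.Prime) {y : G}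
    (hy : ∀ z, p • z ≠ y) (x : G) : ∃ (c : ℤ) (z : G), x = c • y + p • z := by
  have hp' : Prime (p : ℤ) := Nat.prime_iff_prime_int.mp hp
  have hy0 : y ≠ 0 := fun h => hy 0 (by simp [h])
  obtain ⟨n, m, -, ⟨c, d, hcd⟩, hnm⟩ := hG.exists_coprime_zsmul_eq_zsmul hy0 x
  have hpn : ¬(p : ℤ) ∣ n := by
    rintro ⟨t, rfl⟩
    apply hy (c • t • y + d • t • x)
    calc p • (c • t • y + d • t • x) = (c * (p * t)) • y + d • (p * t) • x := by module
      _ = (c * (p * t) + d * m) • y := by rw [hnm]; module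
      _ = y := by rw [hcd, one_smul]
  obtain ⟨u, v, huv⟩ := hp'.irreducible.coprime_iff_not_dvd.mpr hpn
  refine ⟨v * m, u • x, ?_⟩
  calc x = (u * p + v * n) • x := by rw [huv, one_smul]
    _ = v • n • x + p • u • x := by module
    _ = (v * m) • y + p • u • x := by rw [hnm, mul_smul]

-- For a prime `p` dividing `m`, either `H ≤ p G` and both can be divided by `p`, or `H` contains a
-- generator of `G` modulo `p G` and `m / p` already works.
theorem exists_range_nsmul_eq (hG : IsTorsionFreeRankOne G) {m : ℕ} (hm : m ≠ 0)
    (H : AddSubgroup G) (hmH : ∀ x, m • x ∈ H) :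
    ∃ d : ℕ, d ≠ 0 ∧ (nsmulAddMonoidHom d : G →+ G).range = H := by
  induction m using induction_on_primes generalizing H with
  | zero => exact absurd rfl hm
  | one =>
    refine ⟨1, one_ne_zero, ?_⟩
    ext x
    simpa using hmH x
  | prime_mul p k hp ih =>
    have hk : k ≠ 0 := right_ne_zero_of_mul hm
    by_cases hH : ∀ y ∈ H, ∃ z, p • z = y
    · obtain ⟨d, hd, hrange⟩ := ih hk (H.comap (nsmulAddMonoidHom p)) fun x => by
        simpa [mul_smul] using hmH x
      refine ⟨p * d, mul_ne_zero hp.ne_zero hd, ?_⟩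
      have hmem (x : G) : p • x ∈ H ↔ ∃ w, d • w = x := by
        simpa using (SetLike.ext_iff.mp hrange x).symm
      ext y
      constructor
      · rintro ⟨w, rfl⟩
        simpa [mul_smul] using (hmem (d • w)).mpr ⟨w, rfl⟩
      · intro hy
        obtain ⟨z, rfl⟩ := hH y hy
        obtain ⟨w, rfl⟩ := (hmem z).mp hy
        exact ⟨w, by simp [mul_smul]⟩
    · push Not at hH
      obtain ⟨y, hyH, hy⟩ := hH
      refine ih hk H fun x => ?_
      obtain ⟨c, z, rfl⟩ := hG.exists_eq_zsmul_add_nsmul hp hy x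
      have hsum : k • (c • y + p • z) = (k * c : ℤ) • y + (p * k) • z := by module
      rw [hsum]
      exact H.add_mem (H.zsmul_mem hyH _) (hmH z)

theorem nonempty_addEquiv_of_ne_zero (hA : IsTorsionFreeRankOne A) (hB : IsTorsionFreeRankOne B)
    {α : A →+ B} {β : B →+ A} (hα : α ≠ 0) (hβ : β ≠ 0) : Nonempty (A ≃+ B) := by
  have := hB.isAddTorsionFree
  have hαinj := hA.injective_of_ne_zero hα
  have hαβ : α.comp β ≠ 0 := fun h =>
    hβ (AddMonoidHom.ext fun y => hαinj (by simpa using DFunLike.congr_fun h y))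
  obtain ⟨n, m, hm, hnm⟩ := hB.exists_zsmul_eq_zsmul_of_ne_zero hαβ
  have hmem (y : B) : m.natAbs • y ∈ α.range := by
    have hmy : m • y ∈ α.range := hnm y ▸ α.range.zsmul_mem ⟨β y, rfl⟩ n
    rcases Int.natAbs_eq m with h | h <;> rw [h] at hmy <;>
      simpa only [neg_smul, natCast_zsmul, neg_mem_iff] using hmy
  obtain ⟨d, hd, hrange⟩ := hB.exists_range_nsmul_eq (Int.natAbs_ne_zero.mpr hm) α.range hmem
  exact ⟨((AddMonoidHom.ofInjective hαinj).trans (AddEquiv.addSubgroupCongr hrange.symm)).trans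
    (AddMonoidHom.ofInjective (nsmul_right_injective hd)).symm⟩

theorem nonempty_addEquiv_rat_of_forall_exists_zsmul_eq (hG : IsTorsionFreeRankOne G) {x : G}
    (hx : x ≠ 0) (hdiv : ∀ k : ℤ, k ≠ 0 → ∃ z, k • z = x) : Nonempty (G ≃+ ℚ) := by
  obtain ⟨-, -, a, ha⟩ := hG
  have hax : a x ≠ 0 := (map_ne_zero_iff a ha).mpr hx
  refine ⟨AddEquiv.ofBijective a ⟨ha, fun q => ?_⟩⟩
  have hden : ((q / a x).den : ℚ) ≠ 0 := by exact_mod_cast (q / a x).den_nz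
  obtain ⟨z, hz⟩ := hdiv (q / a x).den (by exact_mod_cast (q / a x).den_nz)
  have haz : ((q / a x).den : ℚ) * a z = a x := by simpa using congrArg a hz
  refine ⟨(q / a x).num • z, mul_left_cancel₀ hden ?_⟩
  rw [map_zsmul, zsmul_eq_mul, mul_left_comm, haz, ← Rat.den_mul_eq_num, mul_assoc,
    div_mul_cancel₀ _ hax]

end IsTorsionFreeRankOne

/-- A group `G` is slender if every homomorphism from the Baer–Specker group `ℕ → ℤ` to `G` kills
all but finitely many of the unit vectors; torsion-freeness, usually required as well, is not part
of the definition. -/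
def IsSlender (G : Type*) [AddCommGroup G] : Prop :=
  ∀ f : (ℕ → ℤ) →+ G, ∀ᶠ n in Filter.atTop, f (Pi.single n 1) = 0

section Slender

variable {G : Type*} [AddCommGroup G]

theorem map_ne_zero_of_mul_dvd_sub_single [IsAddTorsionFree G] (f : (ℕ → ℤ) →+ G) {N : ℕ}
    {m k : ℤ} (hm : m ≠ 0) (hk : ∀ z, k • z ≠ f (Pi.single N 1)) {c : ℕ → ℤ}
    (hc : ∀ n, m * k ∣ c n - (Pi.single N m : ℕ → ℤ) n) : f c ≠ 0 := by
  choose w hw using hc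
  have hcw : c = m • (Pi.single N 1 + k • w) := by
    rw [smul_add, ← Pi.single_smul, smul_eq_mul, mul_one, ← sub_eq_iff_eq_add', ← mul_smul]
    exact funext hw
  rw [hcw, map_zsmul, map_add, map_zsmul]
  refine smul_ne_zero hm fun h => hk (-f w) ?_
  rw [smul_neg, neg_eq_of_add_eq_zero_left h]

theorem map_indicator_prod_ne [IsAddTorsionFree G] (f : (ℕ → ℤ) →+ G) {k : ℕ → ℤ}
    (hk0 : ∀ n, k n ≠ 0) (hk : ∀ n z, k n • z ≠ f (Pi.single n 1)) {s t : Set ℕ} {N : ℕ}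
    (hNs : N ∈ s) (hNt : N ∉ t) (hst : ∀ n < N, n ∈ s ↔ n ∈ t) :
    f (s.indicator fun n => ∏ i ∈ Finset.range n, k i) ≠
      f (t.indicator fun n => ∏ i ∈ Finset.range n, k i) := by
  classical
  let m : ℕ → ℤ := fun n => ∏ i ∈ Finset.range n, k i
  have hm0 : m N ≠ 0 := Finset.prod_ne_zero_iff.mpr fun i _ => hk0 i
  have hdvd (n : ℕ) :
      m N * k N ∣ (s.indicator m - t.indicator m) n - (Pi.single N (m N) : ℕ → ℤ) n := by
    rcases lt_trichotomy n N with h | rfl | h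
    · simp [Set.indicator_apply, hst n h, h.ne]
    · simp [hNs, hNt]
    · have hmn : m N * k N ∣ m n := by
        rw [← Finset.prod_range_succ]
        exact Finset.prod_dvd_prod_of_subset _ _ _ (Finset.range_mono h)
      rw [Pi.sub_apply, Set.indicator_apply, Set.indicator_apply, Pi.single_eq_of_ne h.ne',
        sub_zero]
      exact dvd_sub (by split_ifs <;> simp [hmn]) (by split_ifs <;> simp [hmn])
  rw [← sub_ne_zero, ← map_sub]
  exact map_ne_zero_of_mul_dvd_sub_single f hm0 (hk N) hdvd

-- If no `f eₙ` vanishes, some `kₙ ≠ 0` does not divide `f eₙ`, and the sums of `k₀ ⋯ kₙ₋₁ eₙ` over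
-- the subsets of `ℕ` have distinct images in `G`.
theorem exists_map_single_eq_zero [Countable G] [IsAddTorsionFree G]
    (hG : ∀ x : G, x ≠ 0 → ∃ k : ℤ, k ≠ 0 ∧ ∀ z, k • z ≠ x) (f : (ℕ → ℤ) →+ G) :
    ∃ n, f (Pi.single n 1) = 0 := by
  by_contra! hne
  choose k hk0 hk using fun n => hG _ (hne n)
  have hinj : Function.Injective fun s : Set ℕ =>
      f (s.indicator fun n => ∏ i ∈ Finset.range n, k i) := by
    intro s t hfst
    by_contra hst
    have hmin : sInf (symmDiff s t) ∈ symmDiff s t :=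
      Nat.sInf_mem (Set.symmDiff_nonempty.mpr hst)
    have hlt (n : ℕ) (hn : n < sInf (symmDiff s t)) : n ∈ s ↔ n ∈ t := by
      have := Nat.notMem_of_lt_sInf hn
      rw [Set.mem_symmDiff] at this
      tauto
    rcases hmin with ⟨hs, ht⟩ | ⟨ht, hs⟩
    · exact map_indicator_prod_ne f hk0 hk hs ht hlt hfst
    · exact map_indicator_prod_ne f hk0 hk ht hs (fun n hn => (hlt n hn).symm) hfst.symm
  have : Countable (Set ℕ) := hinj.countable
  obtain ⟨g, hg⟩ := exists_surjective_nat (Set ℕ)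
  exact Function.cantor_surjective g hg

theorem extendByZero_single {R ι η : Type*} [Semiring R] [DecidableEq ι] [DecidableEq η]
    {φ : ι → η} (hφ : Function.Injective φ) (i : ι) (r : R) :
    Function.ExtendByZero.linearMap R φ (Pi.single i r) = Pi.single (φ i) r := by
  ext m
  change Function.extend φ (Pi.single i r) 0 m = _
  by_cases hm : ∃ l, φ l = m
  · obtain ⟨l, rfl⟩ := hm
    simp [hφ.extend_apply, Pi.single_apply, hφ.eq_iff]
  · rw [Function.extend_apply' _ _ _ hm, Pi.single_eq_of_ne fun h => hm ⟨i, h.symm⟩, Pi.zero_apply]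

theorem isSlender_of_countable [Countable G] [IsAddTorsionFree G]
    (hG : ∀ x : G, x ≠ 0 → ∃ k : ℤ, k ≠ 0 ∧ ∀ z, k • z ≠ x) : IsSlender G := by
  intro f
  by_contra hf
  obtain ⟨φ, hφ, hne⟩ := Filter.extraction_of_frequently_atTop (Filter.not_eventually.mp hf)
  obtain ⟨n, hn⟩ := exists_map_single_eq_zero hG
    (f.comp (Function.ExtendByZero.linearMap ℤ φ).toAddMonoidHom)
  apply hne n
  rw [← extendByZero_single hφ.injective n (1 : ℤ)]
  exact hn

theorem IsTorsionFreeRankOne.nonempty_addEquiv_rat_or_isSlender (hG : IsTorsionFreeRankOne G) :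
    Nonempty (G ≃+ ℚ) ∨ IsSlender G := by
  have := hG.isAddTorsionFree
  have := hG.countable
  by_cases hdiv : ∃ x : G, x ≠ 0 ∧ ∀ k : ℤ, k ≠ 0 → ∃ z, k • z = x
  · obtain ⟨x, hx, hxdiv⟩ := hdiv
    exact Or.inl (hG.nonempty_addEquiv_rat_of_forall_exists_zsmul_eq hx hxdiv)
  · push Not at hdiv
    exact Or.inr (isSlender_of_countable hdiv)

end Slender

section Product

variable {I : Type*} {A : I → Type*} [∀ i, AddCommGroup (A i)]

/-- For `ν : I → ℕ`, the homomorphism `(ℕ → ℤ) →+ ∏ A i` that sends the `n`-th unit vector to the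
truncation of `x` to the coordinates `i` with `n ≤ ν i`. -/
def tailHom (ν : I → ℕ) (x : ∀ i, A i) : (ℕ → ℤ) →+ ∀ i, A i :=
  AddMonoidHom.mk' (fun c i => (∑ n ∈ Finset.range (ν i + 1), c n) • x i) fun c d => by
    ext i
    simp only [Pi.add_apply, Finset.sum_add_distrib, add_smul]

theorem tailHom_single (ν : I → ℕ) (x : ∀ i, A i) (n : ℕ) (i : I) :
    tailHom ν x (Pi.single n 1) i = if n ≤ ν i then x i else 0 := by
  simp [tailHom, ite_smul]

theorem eq_tailHom_single_add_sum [DecidableEq I] {ν : I → ℕ} (x : ∀ i, A i) {n : ℕ}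
    (hfin : {i | ν i < n}.Finite) :
    x = tailHom ν x (Pi.single n 1) + ∑ i ∈ hfin.toFinset, Pi.single i (x i) := by
  ext i
  rw [Pi.add_apply, tailHom_single, Finset.sum_apply, Finset.sum_pi_single]
  rcases lt_or_ge (ν i) n with h | h
  · simp [h, h.not_ge]
  · simp [h, not_lt.mpr h]

-- Slenderness makes `f` vanish on some tail of `x`, and `x` differs from it by finitely many of its
-- coordinates.
theorem IsSlender.map_eq_zero [Countable I] [DecidableEq I] {G : Type*} [AddCommGroup G]
    (hG : IsSlender G) (f : (∀ i, A i) →+ G) {x : ∀ i, A i}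
    (hx : ∀ i, f (Pi.single i (x i)) = 0) : f x = 0 := by
  obtain ⟨ν, hν⟩ := exists_injective_nat I
  obtain ⟨n, hn⟩ := (hG (f.comp (tailHom ν x))).exists
  have hfin : {i | ν i < n}.Finite := (Set.finite_lt_nat n).preimage hν.injOn
  rw [eq_tailHom_single_add_sum x hfin, map_add, map_sum, Finset.sum_eq_zero fun i _ => hx i,
    add_zero]
  exact hn

theorem map_eq_zero_of_forall_addEquiv [Countable I] {C : Type*} [AddCommGroup C]
    (hA : ∀ i, IsTorsionFreeRankOne (A i)) (hC : IsTorsionFreeRankOne C) (g : C →+ ∀ i, A i)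
    (f : (∀ i, A i) →+ C) {c : C} (hc : ∀ i, Nonempty (A i ≃+ C) → g c i = 0) : f (g c) = 0 := by
  classical
  have hg {i : I} (hi : g c i ≠ 0) : (Pi.evalAddMonoidHom A i).comp g ≠ 0 := fun h =>
    hi (DFunLike.congr_fun h c)
  rcases hC.nonempty_addEquiv_rat_or_isSlender with ⟨⟨e⟩⟩ | hslender
  · have hgc : g c = 0 := by
      ext i
      by_contra hi
      obtain ⟨⟨x, hx⟩, -, a, ha⟩ := hA i
      have hne : e.symm.toAddMonoidHom.comp a ≠ 0 := fun h =>
        hx (ha (e.symm.injective (by simpa using DFunLike.congr_fun h x)))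
      exact hi (hc i ((hA i).nonempty_addEquiv_of_ne_zero hC hne (hg hi)))
    rw [hgc, map_zero]
  · refine hslender.map_eq_zero f fun i => ?_
    by_contra hfi
    have hi : g c i ≠ 0 := fun h => hfi (by rw [h, Pi.single_zero, map_zero])
    have hf : f.comp (AddMonoidHom.single A i) ≠ 0 := fun h => hfi (DFunLike.congr_fun h (g c i))
    exact hi (hc i ((hA i).nonempty_addEquiv_of_ne_zero hC hf (hg hi)))

-- By the previous lemma the pairings `f k (g l c)` depend only on the coordinates of `g l c` in the
-- factors isomorphic to `C`, so the vectors `g l c` remain independent after projection to these.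
theorem enatCard_le_of_biorthogonal [Countable I] {C κ : Type*} [AddCommGroup C] [DecidableEq κ]
    (hA : ∀ i, IsTorsionFreeRankOne (A i)) (hC : IsTorsionFreeRankOne C)
    (g : κ → C →+ ∀ i, A i) (f : κ → (∀ i, A i) →+ C)
    (hfg : ∀ k l c, f k (g l c) = (Pi.single l c : κ → C) k) :
    ENat.card κ ≤ ENat.card {i // Nonempty (A i ≃+ C)} := by
  cases finite_or_infinite {i // Nonempty (A i ≃+ C)} with
  | inr _ => simp
  | inl _ =>
  have := hC.isAddTorsionFree
  obtain ⟨c, hc⟩ := hC.1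
  choose a ha using fun i => (hA i).2.2
  let v : κ → {i // Nonempty (A i ≃+ C)} → ℚ := fun k i => a i (g k c i)
  have hv : LinearIndependent ℤ v := by
    refine linearIndependent_iff'.mpr fun s n hsum k hk => ?_
    have hzero : f k ((∑ l ∈ s, n l • g l) c) = 0 :=
      map_eq_zero_of_forall_addEquiv hA hC _ _ fun i hi => ha i <| by
        simpa [v] using congrFun hsum ⟨i, hi⟩
    rw [AddMonoidHom.finsetSum_apply, map_sum, Finset.sum_eq_single_of_mem k hk] at hzero
    · simpa [hfg, hc] using hzero
    · intro l _ hlk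
      simp [hfg, hlk.symm]
  have hv' : LinearIndependent ℚ v := (LinearIndependent.iff_fractionRing ℤ ℚ).mp hv
  have := hv'.finite
  have := Fintype.ofFinite κ
  have := Fintype.ofFinite {i // Nonempty (A i ≃+ C)}
  simpa using hv'.fintype_card_le_finrank

theorem enatCard_addEquiv_le_of_pi_addEquiv {J : Type*} [Countable J] {B : J → Type*}
    [∀ j, AddCommGroup (B j)] {C : Type*} [AddCommGroup C]
    (hB : ∀ j, IsTorsionFreeRankOne (B j)) (hC : IsTorsionFreeRankOne C)
    (E : (∀ i, A i) ≃+ ∀ j, B j) :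
    ENat.card {i // Nonempty (A i ≃+ C)} ≤ ENat.card {j // Nonempty (B j ≃+ C)} := by
  classical
  let e (i : {i // Nonempty (A i ≃+ C)}) : A i ≃+ C := i.2.some
  refine enatCard_le_of_biorthogonal hB hC
    (fun i => E.toAddMonoidHom.comp ((AddMonoidHom.single A i).comp (e i).symm.toAddMonoidHom))
    (fun i => ((e i).toAddMonoidHom.comp (Pi.evalAddMonoidHom A i)).comp E.symm.toAddMonoidHom)
    fun k l c => ?_
  rcases eq_or_ne k l with rfl | hkl
  · simp
  · simp [hkl, Subtype.coe_injective.ne hkl]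

end Product

theorem nonempty_equiv_of_enatCard_eq {α β : Type*} [Countable α] [Countable β]
    (h : ENat.card α = ENat.card β) : Nonempty (α ≃ β) := by
  cases finite_or_infinite α with
  | inl _ =>
    have : Finite β := ENat.card_lt_top.mp (h ▸ ENat.card_lt_top.mpr ‹_›)
    exact Finite.card_eq.mp (congrArg ENat.toNat h)
  | inr _ =>
    have : Infinite β := ENat.card_eq_top.mp (h ▸ ENat.card_eq_top.mpr ‹_›)
    exact nonempty_equiv_of_countable

section BaerType

/-- Isomorphism of rational groups, the rank one subgroups of `ℚ`. -/
def rationalGroupSetoid : Setoid {H : AddSubgroup ℚ // IsTorsionFreeRankOne H} where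
  r H K := Nonempty (H ≃+ K)
  iseqv := ⟨fun H => ⟨AddEquiv.refl H⟩, fun ⟨e⟩ => ⟨e.symm⟩, fun ⟨e⟩ ⟨e'⟩ => ⟨e.trans e'⟩⟩

/-- Baer's types: the isomorphism classes of torsion-free groups of rank one. Representing them by
subgroups of `ℚ` allows groups in different universes to have the same type. -/
def BaerType : Type :=
  Quotient rationalGroupSetoid

variable {A B : Type*} [AddCommGroup A] [AddCommGroup B]

/-- The type of a torsion-free group of rank one. -/
noncomputable def IsTorsionFreeRankOne.baerType (hA : IsTorsionFreeRankOne A) : BaerType :=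
  have e := AddMonoidHom.ofInjective hA.2.2.choose_spec
  Quotient.mk _ ⟨hA.2.2.choose.range, hA.of_addEquiv e⟩

theorem IsTorsionFreeRankOne.baerType_eq_mk_iff (hA : IsTorsionFreeRankOne A)
    (H : {H : AddSubgroup ℚ // IsTorsionFreeRankOne H}) :
    hA.baerType = Quotient.mk _ H ↔ Nonempty (A ≃+ H) :=
  have e := AddMonoidHom.ofInjective hA.2.2.choose_spec
  Quotient.eq.trans ⟨fun ⟨e'⟩ => ⟨e.trans e'⟩, fun ⟨e'⟩ => ⟨e.symm.trans e'⟩⟩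

theorem IsTorsionFreeRankOne.nonempty_addEquiv_of_baerType_eq (hA : IsTorsionFreeRankOne A)
    (hB : IsTorsionFreeRankOne B) (h : hA.baerType = hB.baerType) : Nonempty (A ≃+ B) :=
  let ⟨e⟩ := (hA.baerType_eq_mk_iff _).mp h
  let ⟨e'⟩ := (hB.baerType_eq_mk_iff _).mp rfl
  ⟨e.trans e'.symm⟩

end BaerType

theorem factors_isomorphic_of_direct_products_isomorphic_rank_one_general
    {I J : Type*} [Countable I] [Countable J]
    (A : I → Type*) (B : J → Type*)
    [∀ i, AddCommGroup (A i)] [∀ j, AddCommGroup (B j)]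
    (hA : ∀ i, IsTorsionFreeRankOne (A i)) (hB : ∀ j, IsTorsionFreeRankOne (B j))
    (h : Nonempty (((i : I) → A i) ≃+ ((j : J) → B j))) :
    ∃ σ : I ≃ J, ∀ i, Nonempty (A i ≃+ B (σ i)) := by
  obtain ⟨E⟩ := h
  have hfiber (t : BaerType) :
      Nonempty ({i // (hA i).baerType = t} ≃ {j // (hB j).baerType = t}) := by
    induction t using Quotient.inductionOn with | _ H
    simp only [IsTorsionFreeRankOne.baerType_eq_mk_iff]
    exact nonempty_equiv_of_enatCard_eq <| le_antisymm
      (enatCard_addEquiv_le_of_pi_addEquiv hB H.2 E)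
      (enatCard_addEquiv_le_of_pi_addEquiv hA H.2 E.symm)
  let σ : I ≃ J := Equiv.ofFiberEquiv (f := fun i => (hA i).baerType)
    (g := fun j => (hB j).baerType) fun t => (hfiber t).some
  have hσ (i : I) : (hB (σ i)).baerType = (hA i).baerType :=
    Equiv.ofFiberEquiv_map (f := fun i => (hA i).baerType) (g := fun j => (hB j).baerType)
      (fun t => (hfiber t).some) i
  exact ⟨σ, fun i => (hA i).nonempty_addEquiv_of_baerType_eq (hB (σ i)) (hσ i).symm⟩

/-- For countable families of torsion-free rank-1 abelian groups `G` with `pG ≠ G` for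
every prime `p`, an isomorphism of the direct products yields a bijection under which the
factors are pairwise isomorphic. -/
theorem factors_isomorphic_of_direct_products_isomorphic_rank_one
    {I J : Type*} [Countable I] [Countable J]
    (A : I → Type*) (B : J → Type*)
    [∀ i, AddCommGroup (A i)] [∀ j, AddCommGroup (B j)]
    (hA1 : ∀ i, IsTorsionFreeRankOne (A i))
    (hAp : ∀ i, ∀ p : ℕ, p.Prime → ¬Function.Surjective (fun g : A i => p • g))
    (hB1 : ∀ j, IsTorsionFreeRankOne (B j))
    (hBp : ∀ j, ∀ p : ℕ, p.Prime → ¬Function.Surjective (fun g : B j => p • g))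
    (h : Nonempty (((i : I) → A i) ≃+ ((j : J) → B j))) :
    ∃ σ : I ≃ J, ∀ i, Nonempty (A i ≃+ B (σ i)) :=
  factors_isomorphic_of_direct_products_isomorphic_rank_one_general A B hA1 hB1 h
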